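/- The space (ℝ², d*) is distance convex: for all x, y, z ∈ ℝ² and every midpoint m of x and y (that is, every m ∈ ℝ² with d*(x,m) = d*(m,y) = d*(x,y)/2), one has d*(m, z) ≤ (1/2)·(d*(x,z) + d*(y,z)). -/

import Mathlib

/-- The river metric on ℝ². -/
noncomputable def riverDist (u v : ℝ × ℝ) : ℝ :=
  if u.1 = v.1 then |u.2 - v.2| else |u.2| + |v.2| + |u.1 - v.1|

/-- The metric segment between two points of ℝ² with the river metric. -/
def riverSegment (u v : ℝ × ℝ) : Set (ℝ × ℝ) :=
  {z | riverDist u z + riverDist z v = riverDist u v}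

/-- A set is convex (w.r.t. the river metric) if it contains all metric segments
between its points. -/
def IsRiverConvex (K : Set (ℝ × ℝ)) : Prop :=
  ∀ u ∈ K, ∀ v ∈ K, riverSegment u v ⊆ K

/-- `m` is a midpoint of `u` and `v` for the river metric. -/
def IsRiverMidpoint (u v m : ℝ × ℝ) : Prop :=
  riverDist u m = riverDist u v / 2 ∧ riverDist m v = riverDist u v / 2

/-!
The river plane is a tree: its Gromov product based at the origin satisfies
`min (x | z) (z | y) ≤ (x | y)`, because it is the Gromov product of the abscissae on the real line,
increased by that of the ordinates when the abscissae agree. This gives the four-point condition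
`d x y + d m z ≤ max (d x m + d y z) (d x z + d y m)`. If `m` is a midpoint of `x` and `y`, then
`d m z ≤ max (d x z) (d y z) - d x y / 2`, and `d x y` bounds the difference of `d x z` and `d y z`.
-/

section FourPoint

variable {X : Type*} {d : X → X → ℝ}

/-- The Gromov product `(x | y)` based at `o`. The distance is a bare function, so that the notion
applies both to `dist` and to `riverDist`. -/
noncomputable def gromovProduct (d : X → X → ℝ) (o x y : X) : ℝ :=
  (d o x + d o y - d x y) / 2

/-- The four-point condition, which characterizes the subspaces of real trees among metric
spaces. -/
def FourPointCondition (d : X → X → ℝ) : Prop :=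
  ∀ x y z w, d x y + d z w ≤ max (d x z + d y w) (d x w + d y z)

theorem gromovProduct_comm (d_comm : ∀ x y, d x y = d y x) (o x y : X) :
    gromovProduct d o x y = gromovProduct d o y x := by
  rw [gromovProduct, gromovProduct, d_comm x y, add_comm (d o x)]

theorem min_add_add_le_of_min_le {P : X → X → ℝ} (P_comm : ∀ x y, P x y = P y x)
    (min_le : ∀ x y z, min (P x z) (P z y) ≤ P x y) (x y z w : X) :
    min (P x z + P y w) (P x w + P y z) ≤ P x y + P z w := by
  have via_z : P x z ≤ P x y ∨ P y z ≤ P x y := by simpa [P_comm z y] using min_le x y z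
  have via_w : P x w ≤ P x y ∨ P y w ≤ P x y := by simpa [P_comm w y] using min_le x y w
  have via_x : P x z ≤ P z w ∨ P x w ≤ P z w := by simpa [P_comm z x] using min_le z w x
  have via_y : P y z ≤ P z w ∨ P y w ≤ P z w := by simpa [P_comm z y] using min_le z w y
  by_contra! hlt
  obtain ⟨hlt_xz, hlt_xw⟩ := lt_min_iff.mp hlt
  rcases via_z with _ | _ <;> rcases via_w with _ | _ <;> rcases via_x with _ | _ <;>
    rcases via_y with _ | _ <;> linarith

theorem FourPointCondition.of_gromovProduct (d_comm : ∀ x y, d x y = d y x) (o : X)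
    (min_le : ∀ x y z, min (gromovProduct d o x z) (gromovProduct d o z y) ≤
      gromovProduct d o x y) :
    FourPointCondition d := by
  intro x y z w
  have h := min_add_add_le_of_min_le (gromovProduct_comm d_comm o) min_le x y z w
  simp only [gromovProduct, min_le_iff] at h
  rw [le_max_iff]
  exact h.imp (fun _ => by linarith) (fun _ => by linarith)

theorem FourPointCondition.triangle (h : FourPointCondition d) (d_self : ∀ x, d x x = 0)
    (d_comm : ∀ x y, d x y = d y x) (x y z : X) : d x z ≤ d x y + d y z := by
  simpa [d_self, d_comm z y] using h x z y y

theorem FourPointCondition.midpoint_le (h : FourPointCondition d) (d_self : ∀ x, d x x = 0)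
    (d_comm : ∀ x y, d x y = d y x) {x y m : X} (hxm : d x m = d x y / 2)
    (hmy : d m y = d x y / 2) (z : X) : d m z ≤ (1 / 2) * (d x z + d y z) := by
  have hxz : d x z ≤ d x y + d y z := h.triangle d_self d_comm x y z
  have hyz : d y z ≤ d x y + d x z := d_comm x y ▸ h.triangle d_self d_comm y x z
  have hmax : d x y + d m z ≤ max (d x m + d y z) (d x z + d y m) := h x y m z
  rw [d_comm y m, hxm, hmy] at hmax
  rcases le_max_iff.mp hmax with _ | _ <;> linarith

end FourPoint

section PseudoMetricSpace

variable {X : Type*} [PseudoMetricSpace X]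

theorem gromovProduct_dist_nonneg (o x y : X) : 0 ≤ gromovProduct dist o x y := by
  have := dist_triangle_left x y o
  rw [gromovProduct]
  linarith

theorem gromovProduct_dist_self (o x : X) : gromovProduct dist o x x = dist o x := by
  simp [gromovProduct]

theorem gromovProduct_dist_le_dist (o x y : X) : gromovProduct dist o x y ≤ dist o x := by
  have := dist_triangle o x y
  rw [gromovProduct]
  linarith

end PseudoMetricSpace

theorem min_gromovProduct_real_le (o a b c : ℝ) :
    min (gromovProduct dist o a c) (gromovProduct dist o c b) ≤ gromovProduct dist o a b := by
  wlog hab : a ≤ b generalizing a b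
  · rw [min_comm, gromovProduct_comm dist_comm o c b, gromovProduct_comm dist_comm o a c,
      gromovProduct_comm dist_comm o a b]
    exact this b a (le_of_not_ge hab)
  have dist_ab : dist a b = b - a := by rw [dist_comm, Real.dist_eq, abs_of_nonneg (by linarith)]
  simp only [min_le_iff, gromovProduct]
  rcases le_total o c with hoc | hco
  · left
    have dist_oc : dist o c = c - o := by rw [dist_comm, Real.dist_eq, abs_of_nonneg (by linarith)]
    have le_ob : b - o ≤ dist o b := by rw [dist_comm]; exact le_abs_self _
    have le_ac : c - a ≤ dist a c := by rw [dist_comm]; exact le_abs_self _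
    linarith
  · right
    have dist_oc : dist o c = o - c := by rw [Real.dist_eq, abs_of_nonneg (by linarith)]
    have le_oa : o - a ≤ dist o a := le_abs_self _
    have le_cb : b - c ≤ dist c b := by rw [dist_comm]; exact le_abs_self _
    linarith

theorem riverDist_self (u : ℝ × ℝ) : riverDist u u = 0 := by
  simp [riverDist]

theorem riverDist_comm (u v : ℝ × ℝ) : riverDist u v = riverDist v u := by
  simp only [riverDist, eq_comm (a := u.1), abs_sub_comm u.1, abs_sub_comm u.2, add_comm |u.2|]

theorem riverDist_zero_left (u : ℝ × ℝ) : riverDist 0 u = |u.1| + |u.2| := by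
  by_cases h : 0 = u.1
  · simp [riverDist, ← h]
  · simp [riverDist, h, add_comm]

theorem gromovProduct_riverDist (u v : ℝ × ℝ) :
    gromovProduct riverDist 0 u v = gromovProduct dist 0 u.1 v.1 +
      if u.1 = v.1 then gromovProduct dist 0 u.2 v.2 else 0 := by
  simp only [gromovProduct, riverDist_zero_left, Real.dist_eq, zero_sub, abs_neg]
  rw [riverDist]
  split_ifs with h
  · rw [h, sub_self, abs_zero]
    ring
  · ring

theorem min_gromovProduct_riverDist_le (u v w : ℝ × ℝ) :
    min (gromovProduct riverDist 0 u w) (gromovProduct riverDist 0 w v) ≤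
      gromovProduct riverDist 0 u v := by
  simp only [gromovProduct_riverDist]
  by_cases huw : u.1 = w.1
  · by_cases hwv : w.1 = v.1
    · simp only [huw, hwv, if_true, min_add_add_left]
      gcongr
      exact min_gromovProduct_real_le 0 u.2 v.2 w.2
    · simp [huw, hwv]
  by_cases hwv : w.1 = v.1
  · simp [← hwv, huw]
  simp only [huw, hwv, if_false, add_zero]
  by_cases huv : u.1 = v.1
  · calc
      min (gromovProduct dist 0 u.1 w.1) (gromovProduct dist 0 w.1 v.1)
          ≤ gromovProduct dist 0 u.1 w.1 := min_le_left _ _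
      _ ≤ gromovProduct dist 0 u.1 v.1 := by
        rw [← huv, gromovProduct_dist_self]
        exact gromovProduct_dist_le_dist 0 u.1 w.1
      _ ≤ _ := by
        rw [if_pos huv]
        exact le_add_of_nonneg_right (gromovProduct_dist_nonneg 0 u.2 v.2)
  · rw [if_neg huv, add_zero]
    exact min_gromovProduct_real_le 0 u.1 v.1 w.1

theorem fourPointCondition_riverDist : FourPointCondition riverDist :=
  .of_gromovProduct riverDist_comm 0 min_gromovProduct_riverDist_le

/-- (ℝ², d*) is distance convex. -/
theorem river_distance_convex :
    ∀ x y z m : ℝ × ℝ, IsRiverMidpoint x y m →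
      riverDist m z ≤ (1 / 2) * (riverDist x z + riverDist y z) := by
  intro x y z m ⟨hxm, hmy⟩
  exact fourPointCondition_riverDist.midpoint_le riverDist_self riverDist_comm hxm hmy z
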